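/- Let A and B be two finite persistence barcodes with positive total lengths and 1 ≤ p ≤ ∞. Let ψ(A) = {[0, ℓ_i^a/L_a]}_{i=1}^{n_a} and ψ(B) = {[0, ℓ_i^b/L_b]}_{i=1}^{n_b} be their normalized projections. Then d_p(ψ(A), ψ(B)) ≤ 4 · n_max^{1 − 1/p} · d_p(A, B) / L_max = 2 · r_p(A, B). -/

import Mathlib

/-!
Everything happens in `ℓ¹`, for one fixed matching that is optimal for `A` and `B`. Pairing the
lengths `u` of `A` with the lengths `v` of `B` along it, with totals `a` and `b`,
`u i / a - v i / b = ((u i - v i) - (a - b) * (v i / b)) / a`. Since the weights `v i / b` sum to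
`1` and `|a - b| ≤ ∑ |u i - v i|`, the normalized lengths differ by at most `2 ∑ |u i - v i| / a`
in `ℓ¹`; by symmetry `a` may be replaced by `max a b`. The difference of two lengths is at most
twice the cost of matching them, so the total cost grows by a factor of at most `4 / max a b`.
The passage to other exponents costs nothing on the left, as `‖·‖_p ≤ ‖·‖_1`, and a factor
`n ^ (1 - 1 / p)` on the right, by Hölder's inequality.
-/

open Finset

/-- A finite persistence barcode with `n` intervals is given by endpoint functions
`x y : Fin n → ℝ` with `x i ≤ y i` (zero-length intervals serve as padding).
`pcost` is the cost of matching interval `i` of `(xa, ya)` with interval `γ i` of `(xb, yb)`. -/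
noncomputable def pcost {n : ℕ} (xa ya xb yb : Fin n → ℝ) (γ : Equiv.Perm (Fin n)) (i : Fin n) : ℝ :=
  max |xa i - xb (γ i)| |ya i - yb (γ i)|

/-- `p`-th Wasserstein distance between barcodes with `n` intervals each:
`d_p(A,B) = min_γ (Σ_i max{|x_i^a − x_{γ(i)}^b|, |y_i^a − y_{γ(i)}^b|}^p)^(1/p)`. -/
noncomputable def dW {n : ℕ} (p : ℝ) (xa ya xb yb : Fin n → ℝ) : ℝ :=
  (Finset.univ : Finset (Equiv.Perm (Fin n))).inf' Finset.univ_nonempty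
    (fun γ => (∑ i, (pcost xa ya xb yb γ i) ^ p) ^ (1 / p))

/-- Bottleneck distance `d_∞(A,B) = min_γ max_i max{|x_i^a − x_{γ(i)}^b|, |y_i^a − y_{γ(i)}^b|}`. -/
noncomputable def dInf {n : ℕ} (xa ya xb yb : Fin n → ℝ) : ℝ :=
  (Finset.univ : Finset (Equiv.Perm (Fin n))).inf' Finset.univ_nonempty
    (fun γ => ⨆ i, pcost xa ya xb yb γ i)

/-- Total length `L_a = Σ_i (y_i − x_i)` of a barcode. -/
noncomputable def lenSum {n : ℕ} (x y : Fin n → ℝ) : ℝ := ∑ i, (y i - x i)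

theorem sum_rpow_le_rpow_sum {ι : Type*} {s : Finset ι} {f : ι → ℝ} {p : ℝ} (hp : 1 ≤ p)
    (hf : ∀ i ∈ s, 0 ≤ f i) : ∑ i ∈ s, f i ^ p ≤ (∑ i ∈ s, f i) ^ p := by
  induction s using Finset.cons_induction with
  | empty => simp [Real.zero_rpow (zero_lt_one.trans_le hp).ne']
  | cons a s ha ih =>
    rw [forall_mem_cons] at hf
    rw [sum_cons, sum_cons]
    calc f a ^ p + ∑ i ∈ s, f i ^ p
        ≤ f a ^ p + (∑ i ∈ s, f i) ^ p := by gcongr; exact ih hf.2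
      _ ≤ (f a + ∑ i ∈ s, f i) ^ p := Real.add_rpow_le_rpow_add hf.1 (sum_nonneg hf.2) hp

theorem rpow_sum_rpow_le_sum {ι : Type*} {s : Finset ι} {f : ι → ℝ} {p : ℝ} (hp : 1 ≤ p)
    (hf : ∀ i ∈ s, 0 ≤ f i) : (∑ i ∈ s, f i ^ p) ^ (1 / p) ≤ ∑ i ∈ s, f i := by
  rw [one_div, Real.rpow_inv_le_iff_of_pos (sum_nonneg fun i hi => Real.rpow_nonneg (hf i hi) p)
    (sum_nonneg hf) (zero_lt_one.trans_le hp)]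
  exact sum_rpow_le_rpow_sum hp hf

theorem sum_le_card_rpow_mul_rpow_sum_rpow {ι : Type*} {s : Finset ι} {f : ι → ℝ} {p : ℝ}
    (hp : 1 ≤ p) (hf : ∀ i ∈ s, 0 ≤ f i) :
    ∑ i ∈ s, f i ≤ (#s : ℝ) ^ (1 - 1 / p) * (∑ i ∈ s, f i ^ p) ^ (1 / p) := by
  simpa [sum_attach s f, sum_attach s fun i => f i ^ p] using
    Real.inner_le_weight_mul_Lp_of_nonneg s.attach hp 1 (fun i => f i) (fun _ => zero_le_one)
      fun i => hf i i.2

theorem iSup_le_sum_of_nonneg {ι : Type*} [Fintype ι] {f : ι → ℝ} (hf : ∀ i, 0 ≤ f i) :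
    ⨆ i, f i ≤ ∑ i, f i :=
  Real.iSup_le (fun i => single_le_sum (fun j _ => hf j) (mem_univ i))
    (sum_nonneg fun i _ => hf i)

theorem sum_le_card_mul_iSup {ι : Type*} [Fintype ι] (f : ι → ℝ) :
    ∑ i, f i ≤ Fintype.card ι * ⨆ i, f i := by
  simpa using sum_le_card_nsmul univ f _ fun i _ => le_ciSup (Set.finite_range f).bddAbove i

section Normalization

variable {ι K : Type*} [Field K] [LinearOrder K] [IsStrictOrderedRing K] {s : Finset ι}
  {u v : ι → K}

theorem sum_abs_div_sum_sub_div_sum_le (hv : ∀ i ∈ s, 0 ≤ v i) (hus : 0 < ∑ i ∈ s, u i)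
    (hvs : 0 < ∑ i ∈ s, v i) :
    ∑ i ∈ s, |u i / ∑ j ∈ s, u j - v i / ∑ j ∈ s, v j| ≤
      2 * (∑ i ∈ s, |u i - v i|) / ∑ i ∈ s, u i := by
  set a := ∑ i ∈ s, u i with ha
  set b := ∑ i ∈ s, v i with hb
  have pointwise : ∀ i ∈ s, |u i / a - v i / b| ≤ (|u i - v i| + |a - b| * (v i / b)) / a := by
    intro i hi
    have split : u i / a - v i / b = ((u i - v i) - (a - b) * (v i / b)) / a := by
      field_simp
      ring
    rw [split, abs_div, abs_of_pos hus]
    gcongr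
    refine (abs_sub _ _).trans_eq ?_
    rw [abs_mul, abs_of_nonneg (div_nonneg (hv i hi) hvs.le)]
  have weights : ∑ i ∈ s, v i / b = 1 := by rw [← sum_div, div_self hvs.ne']
  have totals : |a - b| ≤ ∑ i ∈ s, |u i - v i| := by
    rw [ha, hb, ← sum_sub_distrib]
    exact abs_sum_le_sum_abs _ _
  calc ∑ i ∈ s, |u i / a - v i / b|
      ≤ ∑ i ∈ s, (|u i - v i| + |a - b| * (v i / b)) / a := sum_le_sum pointwise
    _ = (∑ i ∈ s, |u i - v i| + |a - b|) / a := by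
        rw [← sum_div, sum_add_distrib, ← mul_sum, weights, mul_one]
    _ ≤ 2 * (∑ i ∈ s, |u i - v i|) / a := by
        rw [two_mul]
        gcongr

theorem sum_abs_div_sum_sub_div_sum_le_max (hu : ∀ i ∈ s, 0 ≤ u i) (hv : ∀ i ∈ s, 0 ≤ v i)
    (hus : 0 < ∑ i ∈ s, u i) (hvs : 0 < ∑ i ∈ s, v i) :
    ∑ i ∈ s, |u i / ∑ j ∈ s, u j - v i / ∑ j ∈ s, v j| ≤
      2 * (∑ i ∈ s, |u i - v i|) / max (∑ i ∈ s, u i) (∑ i ∈ s, v i) := by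
  rcases max_choice (∑ i ∈ s, u i) (∑ i ∈ s, v i) with h | h <;> rw [h]
  · exact sum_abs_div_sum_sub_div_sum_le hv hus hvs
  · simpa only [abs_sub_comm] using sum_abs_div_sum_sub_div_sum_le hu hvs hus

end Normalization

section Barcode

variable {n : ℕ}

/-- The barcode distance induced by a functional `Φ` on cost vectors: the least value of `Φ` on the
costs of a matching. The `ℓᵖ` norm yields `dW p` and the supremum yields `dInf`, so that the cases
`p < ∞` and `p = ∞` can be treated together. -/
noncomputable def matchingDist (Φ : (Fin n → ℝ) → ℝ) (xa ya xb yb : Fin n → ℝ) : ℝ :=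
  (univ : Finset (Equiv.Perm (Fin n))).inf' univ_nonempty fun γ => Φ (pcost xa ya xb yb γ)

/-- The right endpoints `ℓ_i / L` of the projection `ψ`; its left endpoints are all `0`. -/
noncomputable def normalizedLength (x y : Fin n → ℝ) (i : Fin n) : ℝ :=
  (y i - x i) / lenSum x y

theorem pcost_nonneg (xa ya xb yb : Fin n → ℝ) (γ : Equiv.Perm (Fin n)) (i : Fin n) :
    0 ≤ pcost xa ya xb yb γ i :=
  (abs_nonneg _).trans (le_max_left _ _)

theorem pcost_zero_zero (ya yb : Fin n → ℝ) (γ : Equiv.Perm (Fin n)) (i : Fin n) :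
    pcost (fun _ => 0) ya (fun _ => 0) yb γ i = |ya i - yb (γ i)| := by
  simp [pcost]

theorem abs_length_sub_length_le_two_mul_pcost (xa ya xb yb : Fin n → ℝ)
    (γ : Equiv.Perm (Fin n)) (i : Fin n) :
    |(ya i - xa i) - (yb (γ i) - xb (γ i))| ≤ 2 * pcost xa ya xb yb γ i :=
  calc |(ya i - xa i) - (yb (γ i) - xb (γ i))|
      = |(ya i - yb (γ i)) - (xa i - xb (γ i))| := by rw [sub_sub_sub_comm]
    _ ≤ |ya i - yb (γ i)| + |xa i - xb (γ i)| := abs_sub _ _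
    _ ≤ pcost xa ya xb yb γ i + pcost xa ya xb yb γ i :=
        add_le_add (le_max_right _ _) (le_max_left _ _)
    _ = 2 * pcost xa ya xb yb γ i := (two_mul _).symm

variable {xa ya xb yb : Fin n → ℝ}

theorem sum_pcost_normalizedLength_le (hA : ∀ i, xa i ≤ ya i) (hB : ∀ i, xb i ≤ yb i)
    (hLa : 0 < lenSum xa ya) (hLb : 0 < lenSum xb yb) (γ : Equiv.Perm (Fin n)) :
    ∑ i, pcost (fun _ => 0) (normalizedLength xa ya) (fun _ => 0) (normalizedLength xb yb) γ i ≤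
      4 * (∑ i, pcost xa ya xb yb γ i) / max (lenSum xa ya) (lenSum xb yb) := by
  have hperm : lenSum xb yb = ∑ i, (yb (γ i) - xb (γ i)) :=
    (Equiv.sum_comp γ fun i => yb i - xb i).symm
  have hlength : ∑ i, |(ya i - xa i) - (yb (γ i) - xb (γ i))| ≤
      2 * ∑ i, pcost xa ya xb yb γ i := by
    rw [mul_sum]
    exact sum_le_sum fun i _ => abs_length_sub_length_le_two_mul_pcost xa ya xb yb γ i
  simp only [pcost_zero_zero, normalizedLength]
  rw [hperm] at hLb ⊢
  calc ∑ i, |(ya i - xa i) / lenSum xa ya -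
          (yb (γ i) - xb (γ i)) / ∑ j, (yb (γ j) - xb (γ j))|
      ≤ 2 * (∑ i, |(ya i - xa i) - (yb (γ i) - xb (γ i))|) /
          max (lenSum xa ya) (∑ i, (yb (γ i) - xb (γ i))) :=
        sum_abs_div_sum_sub_div_sum_le_max (fun i _ => sub_nonneg.2 (hA i))
          (fun i _ => sub_nonneg.2 (hB (γ i))) hLa hLb
    _ ≤ 2 * (2 * ∑ i, pcost xa ya xb yb γ i) /
          max (lenSum xa ya) (∑ i, (yb (γ i) - xb (γ i))) := by gcongr
    _ = 4 * (∑ i, pcost xa ya xb yb γ i) /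
          max (lenSum xa ya) (∑ i, (yb (γ i) - xb (γ i))) := by ring

theorem matchingDist_normalizedLength_le {Φ : (Fin n → ℝ) → ℝ} {C : ℝ}
    (hΦ_le : ∀ c : Fin n → ℝ, (∀ i, 0 ≤ c i) → Φ c ≤ ∑ i, c i)
    (hle_Φ : ∀ c : Fin n → ℝ, (∀ i, 0 ≤ c i) → ∑ i, c i ≤ C * Φ c)
    (hA : ∀ i, xa i ≤ ya i) (hB : ∀ i, xb i ≤ yb i)
    (hLa : 0 < lenSum xa ya) (hLb : 0 < lenSum xb yb) :
    matchingDist Φ (fun _ => 0) (normalizedLength xa ya) (fun _ => 0) (normalizedLength xb yb) ≤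
      4 * C * matchingDist Φ xa ya xb yb / max (lenSum xa ya) (lenSum xb yb) := by
  obtain ⟨γ, -, hγ⟩ := exists_mem_eq_inf' univ_nonempty
    fun γ : Equiv.Perm (Fin n) => Φ (pcost xa ya xb yb γ)
  have hoptimal : matchingDist Φ xa ya xb yb = Φ (pcost xa ya xb yb γ) := hγ
  rw [hoptimal, mul_assoc]
  set ψcost := pcost (fun _ => 0) (normalizedLength xa ya) (fun _ => 0) (normalizedLength xb yb) γ
  calc matchingDist Φ (fun _ => 0) (normalizedLength xa ya) (fun _ => 0) (normalizedLength xb yb)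
      ≤ Φ ψcost := inf'_le _ (mem_univ γ)
    _ ≤ ∑ i, ψcost i := hΦ_le _ (pcost_nonneg _ _ _ _ γ)
    _ ≤ 4 * (∑ i, pcost xa ya xb yb γ i) / max (lenSum xa ya) (lenSum xb yb) :=
        sum_pcost_normalizedLength_le hA hB hLa hLb γ
    _ ≤ 4 * (C * Φ (pcost xa ya xb yb γ)) / max (lenSum xa ya) (lenSum xb yb) := by
        gcongr
        exact hle_Φ _ (pcost_nonneg _ _ _ _ γ)

end Barcode

/-- for the normalized projection `ψ(A) = {[0, ℓ_i^a/L_a]}`,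
`d_p(ψ(A), ψ(B)) ≤ 4·n_max^(1−1/p)·d_p(A,B)/L_max  (= 2 r_p(A,B))` for `1 ≤ p < ∞`,
and `d_∞(ψ(A), ψ(B)) ≤ 4·n_max·d_∞(A,B)/L_max  (= 2 r_∞(A,B))` for `p = ∞`. -/
theorem projection_psi_inequality {n : ℕ} (xa ya xb yb : Fin n → ℝ)
    (hA : ∀ i, xa i ≤ ya i) (hB : ∀ i, xb i ≤ yb i)
    (hLa : 0 < lenSum xa ya) (hLb : 0 < lenSum xb yb) :
    (∀ p : ℝ, 1 ≤ p →
      dW p (fun _ => (0 : ℝ)) (fun i => (ya i - xa i) / lenSum xa ya)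
          (fun _ => (0 : ℝ)) (fun i => (yb i - xb i) / lenSum xb yb) ≤
        4 * (n : ℝ) ^ (1 - 1 / p) * dW p xa ya xb yb / max (lenSum xa ya) (lenSum xb yb)) ∧
    dInf (fun _ => (0 : ℝ)) (fun i => (ya i - xa i) / lenSum xa ya)
        (fun _ => (0 : ℝ)) (fun i => (yb i - xb i) / lenSum xb yb) ≤
      4 * (n : ℝ) * dInf xa ya xb yb / max (lenSum xa ya) (lenSum xb yb) := by
  constructor
  · intro p hp
    exact matchingDist_normalizedLength_le (Φ := fun c => (∑ i, c i ^ p) ^ (1 / p))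
      (fun c hc => rpow_sum_rpow_le_sum hp fun i _ => hc i)
      (fun c hc => by
        simpa using sum_le_card_rpow_mul_rpow_sum_rpow (s := univ) hp fun i _ => hc i)
      hA hB hLa hLb
  · exact matchingDist_normalizedLength_le (Φ := fun c => ⨆ i, c i)
      (fun c hc => iSup_le_sum_of_nonneg hc)
      (fun c _ => by simpa using sum_le_card_mul_iSup c)
      hA hB hLa hLb
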